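/- Let a < b and V = ℝ^{n-1} × (a,b). There exists a constant c > 0, depending only on b − a and n, such that for all f ∈ H¹(V; ℝⁿ) whose trace on ℝ^{n-1} × {a} vanishes, one has ‖f‖_{L²(V)} + ‖∇f‖_{L²(V)} ≤ c ‖𝔻f‖_{L²(V)}, where 𝔻f = ∇f + (∇f)ᵀ is the symmetrized gradient. -/

import Mathlib

open MeasureTheory

/-- The partial derivative `∂_j (f · e_i)` of a vector field on `ℝⁿ`. -/
noncomputable def pderivK {n : ℕ} (f : EuclideanSpace ℝ (Fin n) → EuclideanSpace ℝ (Fin n))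
    (i j : Fin n) (x : EuclideanSpace ℝ (Fin n)) : ℝ :=
  fderiv ℝ (fun y => f y i) x (EuclideanSpace.single j 1)


namespace KornSlab
open Filter Topology

/-- Standard basis vector. -/
noncomputable abbrev ee {n : ℕ} (j : Fin n) : EuclideanSpace ℝ (Fin n) := EuclideanSpace.single j 1

/-- Continuous `L²` functions, with partial derivatives off countably many hyperplanes. -/
structure Nice {n : ℕ} (m : Fin n) (u : EuclideanSpace ℝ (Fin n) → ℝ)
    (U : Fin n → EuclideanSpace ℝ (Fin n) → ℝ) : Prop where
  cont : Continuous u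
  mem : MemLp u 2 volume
  meas : ∀ j, Measurable (U j)
  memD : ∀ j, MemLp (U j) 2 volume
  deriv : ∃ S : Set ℝ, S.Countable ∧ ∀ x, x m ∉ S → ∀ j, HasLineDerivAt ℝ u (U j x) x (ee j)

lemma ae_notMem {n : ℕ} (m : Fin n) {S : Set ℝ} (hS : S.Countable) :
    ∀ᵐ x : EuclideanSpace ℝ (Fin n), x m ∉ S := by
  have h1 : ∀ c : ℝ, ∀ᵐ x : EuclideanSpace ℝ (Fin n), x m ≠ c := by
    intro c
    have h := Measure.pi_hyperplane (fun _ : Fin n => (volume : Measure ℝ)) m c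
    have h2 : ∀ᵐ y : Fin n → ℝ, y m ≠ c := by
      rw [ae_iff]; simpa [volume_pi] using h
    exact (PiLp.volume_preserving_ofLp (Fin n)).quasiMeasurePreserving.ae h2
  have := (ae_ball_iff hS).2 (fun c _ => h1 c)
  filter_upwards [this] with x hx hxS
  exact hx _ hxS rfl

lemma countable_line {n : ℕ} (m j : Fin n) {S : Set ℝ} (hS : S.Countable)
    (x : EuclideanSpace ℝ (Fin n)) (hx : x m ∉ S) :
    {t : ℝ | (x + t • ee j) m ∈ S}.Countable := by
  by_cases hj : m = j
  · subst hj
    have : {t : ℝ | (x + t • ee m) m ∈ S} = (fun t => x m + t) ⁻¹' S := by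
      ext t; simp
    rw [this]
    exact hS.preimage (add_right_injective _)
  · have : {t : ℝ | (x + t • ee j) m ∈ S} = ∅ := by
      ext t; simp [hj, hx]
    rw [this]; exact Set.countable_empty

lemma sq_integral_le (g : ℝ → ℝ) (hg : Measurable g) :
    ‖∫ s in (0:ℝ)..1, g s‖ₑ ^ 2 ≤ ∫⁻ s in Set.Ioc (0:ℝ) 1, ‖g s‖ₑ ^ 2 := by
  have : IsProbabilityMeasure (volume.restrict (Set.Ioc (0:ℝ) 1)) := ⟨by simp⟩
  rw [intervalIntegral.integral_of_le zero_le_one]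
  have h1 : ‖∫ s in Set.Ioc (0:ℝ) 1, g s‖ₑ ≤ eLpNorm g 1 (volume.restrict (Set.Ioc (0:ℝ) 1)) := by
    rw [eLpNorm_one_eq_lintegral_enorm]
    exact enorm_integral_le_lintegral_enorm _
  have h2 := eLpNorm_le_eLpNorm_of_exponent_le (p := 1) (q := 2) (by norm_num)
    (hg.aestronglyMeasurable (μ := volume.restrict (Set.Ioc (0:ℝ) 1)))
  have h3 := eLpNorm_nnreal_pow_eq_lintegral (f := g) (p := 2)
    (μ := volume.restrict (Set.Ioc (0:ℝ) 1)) (by norm_num)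
  simp only [NNReal.coe_ofNat, ENNReal.rpow_ofNat, ENNReal.coe_ofNat] at h3
  rw [← h3]
  gcongr
  exact h1.trans h2

lemma diff_le {n : ℕ} {m : Fin n} {u : EuclideanSpace ℝ (Fin n) → ℝ}
    {U : Fin n → EuclideanSpace ℝ (Fin n) → ℝ} (hu : Nice m u U) (j : Fin n) (h : ℝ) :
    ∫⁻ x, ‖u (x + h • ee j) - u x‖ₑ ^ 2 ≤ ‖h‖ₑ ^ 2 * ∫⁻ x, ‖U j x‖ₑ ^ 2 := by
  obtain ⟨S, hS, hd⟩ := hu.deriv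
  have hm := hu.meas j
  have hmm : Measurable (fun p : EuclideanSpace ℝ (Fin n) × ℝ =>
      ‖h * U j (p.1 + (p.2 * h) • ee j)‖ₑ ^ 2) := by
    have : Measurable (fun p : EuclideanSpace ℝ (Fin n) × ℝ => p.1 + (p.2 * h) • ee j) := by
      have : Continuous (fun p : EuclideanSpace ℝ (Fin n) × ℝ => p.1 + (p.2 * h) • ee j) := by
        fun_prop
      exact this.measurable
    exact (((hm.comp this).const_mul h).enorm).pow_const 2
  have key : ∫⁻ x : EuclideanSpace ℝ (Fin n), ∫⁻ s in Set.Ioc (0:ℝ) 1,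
      ‖h * U j (x + (s * h) • ee j)‖ₑ ^ 2 = ‖h‖ₑ ^ 2 * ∫⁻ x, ‖U j x‖ₑ ^ 2 := by
    rw [lintegral_lintegral_swap hmm.aemeasurable]
    have : ∀ s : ℝ, ∫⁻ x, ‖h * U j (x + (s * h) • ee j)‖ₑ ^ 2 = ‖h‖ₑ ^ 2 * ∫⁻ x, ‖U j x‖ₑ ^ 2 := by
      intro s
      rw [lintegral_add_right_eq_self (fun x => ‖h * U j x‖ₑ ^ 2)]
      simp_rw [enorm_mul, mul_pow]
      rw [lintegral_const_mul _ (hm.enorm.pow_const 2)]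
    simp_rw [this]
    simp
  have hfin : ∫⁻ x, ‖U j x‖ₑ ^ 2 < ⊤ := by
    have := (hu.memD j).2
    have h3 := eLpNorm_nnreal_pow_eq_lintegral (f := U j) (p := 2) (μ := volume) (by norm_num)
    simp only [NNReal.coe_ofNat, ENNReal.rpow_ofNat, ENNReal.coe_ofNat] at h3
    rw [← h3]
    exact ENNReal.pow_lt_top this
  rw [← key]
  apply lintegral_mono_ae
  have hae : ∀ᵐ x : EuclideanSpace ℝ (Fin n), ∫⁻ s in Set.Ioc (0:ℝ) 1,
      ‖h * U j (x + (s * h) • ee j)‖ₑ ^ 2 < ⊤ := by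
    apply ae_lt_top hmm.lintegral_prod_right'
    rw [key]
    exact (ENNReal.mul_lt_top (ENNReal.pow_lt_top enorm_lt_top) hfin).ne
  filter_upwards [hae, ae_notMem m hS] with x hx hxS
  have hmx : Measurable (fun s : ℝ => h * U j (x + (s * h) • ee j)) := by
    have : Continuous (fun s : ℝ => x + (s * h) • ee j) := by fun_prop
    exact (hm.comp this.measurable).const_mul h
  by_cases h0 : h = 0
  · simp [h0]
  have hIntv : IntervalIntegrable (fun s : ℝ => h * U j (x + (s * h) • ee j)) volume 0 1 := by
    rw [intervalIntegrable_iff_integrableOn_Ioc_of_le zero_le_one]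
    have : MemLp (fun s : ℝ => h * U j (x + (s * h) • ee j)) 2 (volume.restrict (Set.Ioc (0:ℝ) 1)) := by
      refine ⟨hmx.aestronglyMeasurable, ?_⟩
      have h3 := eLpNorm_nnreal_pow_eq_lintegral (f := (fun s : ℝ => h * U j (x + (s * h) • ee j)))
        (p := 2) (μ := (volume.restrict (Set.Ioc (0:ℝ) 1))) (by norm_num)
      simp only [NNReal.coe_ofNat, ENNReal.rpow_ofNat, ENNReal.coe_ofNat] at h3
      rw [← h3] at hx
      by_contra hc
      rw [not_lt_top_iff] at hc
      rw [hc] at hx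
      simp at hx
    exact this.integrable (by norm_num)
  have hftc := integral_eq_of_hasDerivAt_off_countable (fun s : ℝ => u (x + (s * h) • ee j))
    (fun s : ℝ => h * U j (x + (s * h) • ee j)) (a := 0) (b := 1)
    (s := (fun s => s * h) ⁻¹' {t : ℝ | (x + t • ee j) m ∈ S})
    ((countable_line m j hS x hxS).preimage (mul_left_injective₀ h0))
    (by
      have := hu.cont
      apply Continuous.continuousOn
      fun_prop)
    (by
      rintro s ⟨-, hs⟩
      have h1 := hd (x + (s * h) • ee j) hs j
      unfold HasLineDerivAt at h1
      have h2 : HasDerivAt (fun t : ℝ => (t - s) * h) h s := by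
        simpa using ((hasDerivAt_id s).sub_const s).mul_const h
      have h1' : HasDerivAt (fun t : ℝ => u (x + (s * h) • ee j + t • ee j))
        (U j (x + (s * h) • ee j)) ((s - s) * h) := by simpa using h1
      have h3 := h1'.comp s h2
      have e1 : (fun s => u (x + (s * h) • ee j)) =
          ((fun t => u (x + (s * h) • ee j + t • ee j)) ∘ fun t => (t - s) * h) := by
        ext t
        simp only [Function.comp]
        rw [add_assoc, ← add_smul]
        congr 3
        ring
      rw [e1, mul_comm h]
      exact h3)
    hIntv
  have := sq_integral_le _ hmx
  rw [hftc] at this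
  simpa using this

lemma eLpNorm_sq {α : Type*} [MeasurableSpace α] {μ : Measure α} (f : α → ℝ) :
    eLpNorm f 2 μ ^ 2 = ∫⁻ x, ‖f x‖ₑ ^ 2 ∂μ := by
  have h3 := eLpNorm_nnreal_pow_eq_lintegral (f := f) (p := 2) (μ := μ) (by norm_num)
  simpa only [NNReal.coe_ofNat, ENNReal.rpow_ofNat, ENNReal.coe_ofNat] using h3

/-- Difference quotient. -/
noncomputable def DQ {n : ℕ} (u : EuclideanSpace ℝ (Fin n) → ℝ) (j : Fin n) (h : ℝ)
    (x : EuclideanSpace ℝ (Fin n)) : ℝ := h⁻¹ * (u (x + h • ee j) - u x)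

lemma DQ_mem {n : ℕ} {u : EuclideanSpace ℝ (Fin n) → ℝ} (hu : MemLp u 2 volume) (j : Fin n) (h : ℝ) :
    MemLp (DQ u j h) 2 volume := by
  have h1 : MemLp (fun x => u (x + h • ee j)) 2 volume :=
    hu.comp_measurePreserving (measurePreserving_add_right volume (h • ee j))
  exact (h1.sub hu).const_mul h⁻¹

lemma DQ_le {n : ℕ} {m : Fin n} {u : EuclideanSpace ℝ (Fin n) → ℝ}
    {U : Fin n → EuclideanSpace ℝ (Fin n) → ℝ} (hu : Nice m u U) (j : Fin n) (h : ℝ) :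
    eLpNorm (DQ u j h) 2 volume ≤ eLpNorm (U j) 2 volume := by
  by_cases h0 : h = 0
  · subst h0; 
    have : DQ u j 0 = 0 := by ext x; simp [DQ]
    rw [this]; simp
  rw [← ENNReal.pow_le_pow_left_iff (n := 2) (by norm_num), eLpNorm_sq, eLpNorm_sq]
  have hm : Measurable (fun x => ‖u (x + h • ee j) - u x‖ₑ ^ 2) := by
    have := hu.cont
    have h2 : Continuous (fun x => u (x + h • ee j) - u x) := by fun_prop
    exact h2.measurable.enorm.pow_const 2
  have h1 : ∫⁻ x, ‖DQ u j h x‖ₑ ^ 2 = ‖h⁻¹‖ₑ ^ 2 * ∫⁻ x, ‖u (x + h • ee j) - u x‖ₑ ^ 2 := by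
    rw [← lintegral_const_mul _ hm]
    simp [DQ, enorm_mul, mul_pow]
  rw [h1]
  calc _ ≤ ‖h⁻¹‖ₑ ^ 2 * (‖h‖ₑ ^ 2 * ∫⁻ x, ‖U j x‖ₑ ^ 2) := by gcongr; exact diff_le hu j h
    _ = _ := by
      rw [← mul_assoc, ← mul_pow, ← enorm_mul, inv_mul_cancel₀ h0]; simp

lemma DQ_tendsto_ae {n : ℕ} {m : Fin n} {u : EuclideanSpace ℝ (Fin n) → ℝ}
    {U : Fin n → EuclideanSpace ℝ (Fin n) → ℝ} (hu : Nice m u U) (j : Fin n)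
    {h : ℕ → ℝ} (hh : Tendsto h atTop (𝓝[≠] 0)) :
    ∀ᵐ x, Tendsto (fun k => DQ u j (h k) x) atTop (𝓝 (U j x)) := by
  obtain ⟨S, hS, hd⟩ := hu.deriv
  filter_upwards [ae_notMem m hS] with x hx
  have h1 := hd x hx j
  unfold HasLineDerivAt at h1
  have h2 := (hasDerivAt_iff_tendsto_slope.1 h1).comp hh
  refine h2.congr ?_
  intro k
  simp [DQ, slope]

lemma DQ_tendsto {n : ℕ} {m : Fin n} {u : EuclideanSpace ℝ (Fin n) → ℝ}
    {U : Fin n → EuclideanSpace ℝ (Fin n) → ℝ} (hu : Nice m u U) (j : Fin n)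
    {h : ℕ → ℝ} (hh : Tendsto h atTop (𝓝[≠] 0)) :
    Tendsto (fun k => (DQ_mem hu.mem j (h k)).toLp) atTop (𝓝 (hu.memD j).toLp) := by
  set d := fun k => (DQ_mem hu.mem j (h k)).toLp with hdef
  set w := (hu.memD j).toLp with hw
  have hd : ∀ k, ‖d k‖ ≤ ‖w‖ := by
    intro k
    rw [hdef, hw, Lp.norm_toLp, Lp.norm_toLp]
    exact ENNReal.toReal_mono (hu.memD j).2.ne (DQ_le hu j (h k))
  have hpar : ∀ k, ‖d k + w‖ ^ 2 + ‖d k - w‖ ^ 2 ≤ 4 * ‖w‖ ^ 2 := by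
    intro k
    have h1 := parallelogram_law_with_norm ℝ (d k) w
    have h2 : ‖d k‖ ^ 2 ≤ ‖w‖ ^ 2 := by gcongr; exact hd k
    linarith
  have hF := Lp.eLpNorm_lim_le_liminf_eLpNorm (p := 2) (μ := volume)
    (f := fun k => (DQ u j (h k) + U j)) (fun k => ((DQ_mem hu.mem j (h k)).add (hu.memD j)).1)
    (U j + U j) (by
      filter_upwards [DQ_tendsto_ae hu j hh] with x hx
      exact hx.add_const _)
  have hF1 : ∀ k, eLpNorm (DQ u j (h k) + U j) 2 volume = ENNReal.ofReal ‖d k + w‖ := by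
    intro k
    rw [hdef, hw, ← MemLp.toLp_add, Lp.norm_toLp, ENNReal.ofReal_toReal]
    exact ((DQ_mem hu.mem j (h k)).add (hu.memD j)).2.ne
  have hF2 : eLpNorm (U j + U j) 2 volume = ENNReal.ofReal (2 * ‖w‖) := by
    have : ‖w + w‖ = 2 * ‖w‖ := by
      rw [← two_smul ℝ w, norm_smul]; simp
    rw [← this, hw, ← MemLp.toLp_add, Lp.norm_toLp, ENNReal.ofReal_toReal]
    exact ((hu.memD j).add (hu.memD j)).2.ne
  simp_rw [hF1, hF2] at hF
  rw [tendsto_iff_norm_sub_tendsto_zero]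
  rw [Metric.tendsto_atTop']
  intro ε hε
  by_cases hw0 : ‖w‖ = 0
  · refine ⟨0, fun k _ => ?_⟩
    have := hpar k
    rw [hw0] at this
    have : ‖d k - w‖ ^ 2 ≤ 0 := by nlinarith [sq_nonneg ‖d k + w‖]
    have : ‖d k - w‖ = 0 := by nlinarith [norm_nonneg (d k - w)]
    simp [this, hε]
  have hwp : 0 < ‖w‖ := lt_of_le_of_ne (norm_nonneg _) (Ne.symm hw0)
  -- choose η with η * 4‖w‖ ≤ ε^2
  obtain ⟨η, hη, hη1, hη2⟩ : ∃ η : ℝ, 0 < η ∧ η < 2 * ‖w‖ ∧ 4 * ‖w‖ * η < ε ^ 2 := by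
    refine ⟨min ‖w‖ (ε ^ 2 / (8 * ‖w‖)), by positivity, ?_, ?_⟩
    · have := min_le_left ‖w‖ (ε ^ 2 / (8 * ‖w‖)); linarith
    · have := min_le_right ‖w‖ (ε ^ 2 / (8 * ‖w‖))
      calc _ ≤ 4 * ‖w‖ * (ε ^ 2 / (8 * ‖w‖)) := by gcongr
        _ = ε ^ 2 / 2 := by field_simp; norm_num
        _ < ε ^ 2 := by have : 0 < ε ^ 2 := by positivity
                        linarith
  have hlt : ENNReal.ofReal (2 * ‖w‖ - η) < liminf (fun k => ENNReal.ofReal ‖d k + w‖) atTop := by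
    refine lt_of_lt_of_le ?_ hF
    rw [ENNReal.ofReal_lt_ofReal_iff (by positivity)]
    linarith
  have hev := eventually_lt_of_lt_liminf hlt
  obtain ⟨K, hK⟩ := eventually_atTop.1 hev
  refine ⟨K, fun k hk => ?_⟩
  have h1 := hK k hk.le
  rw [ENNReal.ofReal_lt_ofReal_iff_of_nonneg (by linarith)] at h1
  have h2 := hpar k
  have h3 : (2 * ‖w‖ - η) ^ 2 ≤ ‖d k + w‖ ^ 2 := by
    apply pow_le_pow_left₀ (by linarith) h1.le
  have h4 : ‖d k - w‖ ^ 2 < ε ^ 2 := by nlinarith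
  have h5 : ‖d k - w‖ < ε := lt_of_pow_lt_pow_left₀ 2 hε.le h4
  simpa using h5

lemma DQ_swap {n : ℕ} {u v : EuclideanSpace ℝ (Fin n) → ℝ} (hu : MemLp u 2 volume)
    (hv : MemLp v 2 volume) (i j : Fin n) (h : ℝ) :
    ∫ x, DQ u i h x * DQ v j h x = ∫ x, DQ u j (-h) x * DQ v i (-h) x := by
  have hT : ∀ (w : EuclideanSpace ℝ (Fin n) → ℝ), MemLp w 2 volume → ∀ c,
      MemLp (fun x => w (x + c)) 2 volume := fun w hw c =>
    hw.comp_measurePreserving (measurePreserving_add_right volume c)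
  have hI : ∀ c d, Integrable (fun x => u (x + c) * v (x + d)) := fun c d =>
    (hT u hu c).integrable_mul (hT v hv d)
  have hS : ∀ c d e, ∫ x, u (x + c) * v (x + d) = ∫ x, u (x + (c + e)) * v (x + (d + e)) := by
    intro c d e
    rw [← integral_add_right_eq_self (fun x => u (x + c) * v (x + d)) e]
    congr 1; ext x
    rw [add_assoc, add_assoc, add_comm e c, add_comm e d]
  have hexp : ∀ (k : ℝ) (c d : EuclideanSpace ℝ (Fin n)),
      ∫ x, (k * (u (x + c) - u x)) * (k * (v (x + d) - v x)) =
      k ^ 2 * ((∫ x, u (x + c) * v (x + d)) - (∫ x, u (x + c) * v (x + 0))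
        - (∫ x, u (x + 0) * v (x + d)) + ∫ x, u (x + 0) * v (x + 0)) := by
    intro k c d
    have i1 := (hI c d).sub (hI c 0)
    have i2 := i1.sub (hI 0 d)
    have t1 := integral_sub (hI c d) (hI c 0)
    have t2 := integral_sub i1 (hI 0 d)
    have t3 := integral_add i2 (hI 0 0)
    simp only [Pi.sub_apply] at t1 t2 t3
    rw [← t1, ← t2, ← t3, ← integral_const_mul]
    congr 1; ext x; simp only [add_zero]; ring
  unfold DQ
  rw [hexp, hexp]
  have e1 := hS (h • ee i) (h • ee j) (-(h • ee i) - (h • ee j))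
  have e2 := hS (h • ee i) 0 (-(h • ee i))
  have e3 := hS 0 (h • ee j) (-(h • ee j))
  simp only [neg_smul] 
  rw [e1, e2, e3]
  have a1 : h • ee i + (-(h • ee i) - h • ee j) = -(h • ee j : EuclideanSpace ℝ (Fin n)) := by abel
  have a2 : h • ee j + (-(h • ee i) - h • ee j) = -(h • ee i : EuclideanSpace ℝ (Fin n)) := by abel
  rw [a1, a2]
  simp only [add_neg_cancel, zero_add, inv_neg, neg_sq]
  ring

lemma inner_toLp {n : ℕ} {f g : EuclideanSpace ℝ (Fin n) → ℝ} (hf : MemLp f 2 volume)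
    (hg : MemLp g 2 volume) : inner ℝ hf.toLp hg.toLp = ∫ x, f x * g x := by
  rw [L2.inner_def]
  apply integral_congr_ae
  filter_upwards [hf.coeFn_toLp, hg.coeFn_toLp] with x h1 h2
  rw [h1, h2]
  simp [mul_comm]

lemma swap {n : ℕ} {m : Fin n} {u v : EuclideanSpace ℝ (Fin n) → ℝ}
    {U V : Fin n → EuclideanSpace ℝ (Fin n) → ℝ} (hu : Nice m u U) (hv : Nice m v V) (i j : Fin n) :
    ∫ x, U i x * V j x = ∫ x, U j x * V i x := by
  let h : ℕ → ℝ := fun k => 1 / ((k : ℝ) + 1)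
  have hh : Tendsto h atTop (𝓝[≠] 0) := by
    rw [tendsto_nhdsWithin_iff]
    refine ⟨tendsto_one_div_add_atTop_nhds_zero_nat, Eventually.of_forall fun k => ?_⟩
    simp only [h, Set.mem_compl_iff, Set.mem_singleton_iff]; positivity
  have hh' : Tendsto (fun k => - h k) atTop (𝓝[≠] 0) := by
    rw [tendsto_nhdsWithin_iff]
    refine ⟨by simpa [h] using (tendsto_one_div_add_atTop_nhds_zero_nat (𝕜 := ℝ)).neg, Eventually.of_forall fun k => ?_⟩
    simp only [h, Set.mem_compl_iff, Set.mem_singleton_iff, neg_eq_zero]; positivity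
  have l1 := (DQ_tendsto hu i hh).inner (𝕜 := ℝ) (DQ_tendsto hv j hh)
  have l2 := (DQ_tendsto hu j hh').inner (𝕜 := ℝ) (DQ_tendsto hv i hh')
  simp_rw [inner_toLp] at l1 l2
  refine tendsto_nhds_unique l1 (l2.congr fun k => ?_)
  exact (DQ_swap hu.mem hv.mem i j (h k)).symm

/-- Korn on the whole space. -/
lemma korn_whole {n : ℕ} {m : Fin n} {F : Fin n → EuclideanSpace ℝ (Fin n) → ℝ}
    {G : Fin n → Fin n → EuclideanSpace ℝ (Fin n) → ℝ} (hF : ∀ i, Nice m (F i) (G i)) :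
    2 * ∑ i, ∑ j, ∫ x, G i j x ^ 2 ≤ ∑ i, ∑ j, ∫ x, (G i j x + G j i x) ^ 2 := by
  have hI : ∀ i j k l, Integrable (fun x => G i j x * G k l x) := fun i j k l =>
    ((hF i).memD j).integrable_mul ((hF k).memD l)
  have hIs : ∀ i j, Integrable (fun x => G i j x ^ 2) := fun i j => by
    simpa [sq] using hI i j i j
  have e1 : ∀ i j, ∫ x, (G i j x + G j i x) ^ 2 =
      (∫ x, G i j x ^ 2) + (∫ x, G j i x ^ 2) + 2 * ∫ x, G i i x * G j j x := by
    intro i j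
    have hsw : ∫ x, G i i x * G j j x = ∫ x, G i j x * G j i x := swap (hF i) (hF j) i j
    have t1 := integral_add (hIs i j) (hIs j i)
    have t2 := integral_add ((hIs i j).add (hIs j i)) ((hI i j j i).const_mul 2)
    simp only [Pi.add_apply] at t1 t2
    rw [hsw, ← integral_const_mul, ← t1, ← t2]
    congr 1; ext x; ring
  have e2 : ∑ i, ∑ j, ∫ x, G i i x * G j j x = ∫ x, (∑ i, G i i x) ^ 2 := by
    simp_rw [sq, Finset.sum_mul_sum]
    rw [integral_finsetSum _ (fun i _ => integrable_finsetSum _ fun j _ => hI _ _ _ _)]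
    congr 1; ext i
    rw [integral_finsetSum _ (fun j _ => hI _ _ _ _)]
  have e3 : 0 ≤ ∫ x, (∑ i, G i i x) ^ 2 := integral_nonneg fun x => sq_nonneg _
  have e4 : ∑ i, ∑ j, ∫ x, G j i x ^ 2 = ∑ i, ∑ j, ∫ x, G i j x ^ 2 := Finset.sum_comm
  simp_rw [e1, Finset.sum_add_distrib, ← Finset.mul_sum]
  rw [e4, e2]
  linarith

end KornSlab

namespace KornSlab
open Filter Topology

/-- Linear part of the reflection. -/
noncomputable def Lm {n : ℕ} (m : Fin n) (l : ℝ) :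
    EuclideanSpace ℝ (Fin n) →L[ℝ] EuclideanSpace ℝ (Fin n) :=
  ContinuousLinearMap.id ℝ _ + (-(1 + l)) • (EuclideanSpace.proj m).smulRight (ee m)

lemma Lm_apply {n : ℕ} (m : Fin n) (l : ℝ) (x : EuclideanSpace ℝ (Fin n)) :
    Lm m l x = x + (-(1 + l) * x m) • ee m := by
  simp [Lm, smul_smul]

/-- Reflection `x_m ↦ b - l (x_m - b)`. -/
noncomputable def Rf {n : ℕ} (m : Fin n) (l b : ℝ) (x : EuclideanSpace ℝ (Fin n)) :
    EuclideanSpace ℝ (Fin n) := Lm m l x + ((1 + l) * b) • ee m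

lemma Rf_m {n : ℕ} (m : Fin n) (l b : ℝ) (x : EuclideanSpace ℝ (Fin n)) :
    (Rf m l b x) m = b - l * (x m - b) := by
  simp [Rf, Lm_apply]; ring

/-- Factor of the chain rule. -/
noncomputable def kap {n : ℕ} (m : Fin n) (l : ℝ) (j : Fin n) : ℝ := if j = m then -l else 1

lemma Lm_ee {n : ℕ} (m : Fin n) (l : ℝ) (j : Fin n) : Lm m l (ee j) = kap m l j • ee j := by
  rw [Lm_apply, kap]
  split_ifs with h
  · subst h
    simp only [PiLp.single_apply, if_true, mul_one]
    module
  · have : (ee j : EuclideanSpace ℝ (Fin n)) m = 0 := by simp [Ne.symm h]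
    rw [this]; simp

lemma Lm_det {n : ℕ} (m : Fin n) {l : ℝ} (hl : 0 < l) :
    LinearMap.det (Lm m l : EuclideanSpace ℝ (Fin n) →ₗ[ℝ] EuclideanSpace ℝ (Fin n)) ≠ 0 := by
  intro h
  have h1 := LinearMap.bot_lt_ker_of_det_eq_zero h
  apply h1.ne'
  rw [LinearMap.ker_eq_bot']
  intro x hx
  have hx' : x + (-(1 + l) * x m) • ee m = 0 := by rw [← Lm_apply]; exact hx
  have h2 : (x + (-(1 + l) * x m) • ee m : EuclideanSpace ℝ (Fin n)) m = 0 := by rw [hx']; rfl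
  have h3 : x m + (-(1 + l) * x m) = 0 := by simpa using h2
  have h4 : x m = 0 := by
    have : l * x m = 0 := by linarith
    exact (mul_eq_zero.1 this).resolve_left hl.ne'
  rw [h4] at hx'
  simpa using hx'

/-- Jacobian constant. -/
noncomputable def cc {n : ℕ} (m : Fin n) (l : ℝ) : ℝ :=
  |(LinearMap.det (Lm m l : EuclideanSpace ℝ (Fin n) →ₗ[ℝ] EuclideanSpace ℝ (Fin n)))⁻¹|

lemma cc_nonneg {n : ℕ} (m : Fin n) (l : ℝ) : 0 ≤ cc m l := abs_nonneg _

lemma Rf_cont {n : ℕ} (m : Fin n) (l b : ℝ) : Continuous (Rf m l b) := by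
  unfold Rf; fun_prop

lemma map_Rf {n : ℕ} (m : Fin n) {l : ℝ} (hl : 0 < l) (b : ℝ) :
    Measure.map (Rf m l b) volume = ENNReal.ofReal (cc m l) • volume := by
  have h1 := Measure.map_linearMap_addHaar_eq_smul_addHaar
    (volume : Measure (EuclideanSpace ℝ (Fin n))) (Lm_det m hl)
  have h2 : Rf m l b = (fun x => x + ((1 + l) * b) • ee m) ∘ (Lm m l) := rfl
  rw [h2, ← Measure.map_map (by fun_prop) (by fun_prop)]
  rw [ContinuousLinearMap.coe_coe] at h1
  rw [h1, Measure.map_smul, (measurePreserving_add_right volume _).map_eq]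
  rfl

lemma memLp_Rf {n : ℕ} (m : Fin n) {l : ℝ} (hl : 0 < l) (b : ℝ)
    {W : EuclideanSpace ℝ (Fin n) → ℝ} (hW : MemLp W 2 volume) :
    MemLp (fun x => W (Rf m l b x)) 2 volume := by
  have h1 : MemLp W 2 (Measure.map (Rf m l b) volume) := by
    rw [map_Rf m hl b]
    exact hW.smul_measure ENNReal.ofReal_ne_top
  exact (memLp_map_measure_iff h1.1 (Rf_cont m l b).aemeasurable).1 h1

lemma integral_Rf {n : ℕ} (m : Fin n) {l : ℝ} (hl : 0 < l) (b : ℝ)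
    {W : EuclideanSpace ℝ (Fin n) → ℝ} (hW : Measurable W) :
    ∫ x, W (Rf m l b x) = cc m l * ∫ x, W x := by
  rw [← integral_map (Rf_cont m l b).aemeasurable hW.aestronglyMeasurable, map_Rf m hl b,
    integral_smul_measure, ENNReal.toReal_ofReal (cc_nonneg _ _)]
  rfl

/-- The slab. -/
def slab {n : ℕ} (m : Fin n) (a b : ℝ) : Set (EuclideanSpace ℝ (Fin n)) := {x | a < x m ∧ x m < b}

lemma meas_m {n : ℕ} (m : Fin n) : Continuous (fun x : EuclideanSpace ℝ (Fin n) => x m) := by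
  fun_prop

lemma slab_meas {n : ℕ} (m : Fin n) (a b : ℝ) : MeasurableSet (slab m a b) :=
  ((isOpen_lt continuous_const (meas_m m)).inter (isOpen_lt (meas_m m) continuous_const)).measurableSet

/-- Folding map. -/
noncomputable def Ph {n : ℕ} (m : Fin n) (l a b : ℝ) (x : EuclideanSpace ℝ (Fin n)) :
    EuclideanSpace ℝ (Fin n) := x + (max a (min (x m) (b - l * (x m - b))) - x m) • ee m

lemma Ph_m {n : ℕ} (m : Fin n) (l a b : ℝ) (x : EuclideanSpace ℝ (Fin n)) :
    (Ph m l a b x) m = max a (min (x m) (b - l * (x m - b))) := by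
  simp [Ph]

lemma Ph_low {n : ℕ} {m : Fin n} {l a b : ℝ} {x : EuclideanSpace ℝ (Fin n)} (h : x m < a) :
    (Ph m l a b x) m = a := by
  rw [Ph_m, max_eq_left]; exact (min_le_left _ _).trans h.le

lemma Ph_high {n : ℕ} {m : Fin n} {l a b : ℝ} {x : EuclideanSpace ℝ (Fin n)}
    (h : b - l * (x m - b) < a) : (Ph m l a b x) m = a := by
  rw [Ph_m, max_eq_left]; exact (min_le_right _ _).trans h.le

lemma Ph_mid {n : ℕ} {m : Fin n} {l a b : ℝ} (hl : 0 < l) {x : EuclideanSpace ℝ (Fin n)}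
    (h : a < x m) (h' : x m < b) : Ph m l a b x = x := by
  have : 0 < l * (b - x m) := mul_pos hl (by linarith)
  rw [Ph, min_eq_left (by nlinarith), max_eq_right h.le]; simp

lemma Ph_ref {n : ℕ} {m : Fin n} {l a b : ℝ} (hl : 0 < l) {x : EuclideanSpace ℝ (Fin n)}
    (h : b < x m) (h' : a < b - l * (x m - b)) : Ph m l a b x = Rf m l b x := by
  have : 0 < l * (x m - b) := mul_pos hl (by linarith)
  rw [Ph, min_eq_right (by linarith), max_eq_right h'.le, Rf, Lm_apply]
  module

lemma Ph_cont {n : ℕ} (m : Fin n) (l a b : ℝ) : Continuous (Ph m l a b) := by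
  unfold Ph; fun_prop

lemma four {t a b l : ℝ} (hl : 0 < l) (h : t ∉ ({a, b, b + (b - a) / l} : Set ℝ)) :
    t < a ∨ (a < t ∧ t < b) ∨ (b < t ∧ a < b - l * (t - b)) ∨ (b < t ∧ b - l * (t - b) < a) := by
  simp only [Set.mem_insert_iff, Set.mem_singleton_iff, not_or] at h
  obtain ⟨h1, h2, h3⟩ := h
  rcases lt_or_gt_of_ne h1 with h | h
  · exact Or.inl h
  rcases lt_or_gt_of_ne h2 with h' | h'
  · exact Or.inr (Or.inl ⟨h, h'⟩)
  have : a ≠ b - l * (t - b) := by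
    intro hc; apply h3; rw [hc]; field_simp; ring
  rcases lt_or_gt_of_ne this with h4 | h4
  · exact Or.inr (Or.inr (Or.inl ⟨h', h4⟩))
  · exact Or.inr (Or.inr (Or.inr ⟨h', h4⟩))

lemma nice_ext {n : ℕ} (m : Fin n) {a b l : ℝ} (hab : a < b) (hl : 0 < l)
    {u : EuclideanSpace ℝ (Fin n) → ℝ} (hu : Differentiable ℝ u) (h0 : ∀ x, x m = a → u x = 0)
    (hL : MemLp u 2 (volume.restrict (slab m a b)))
    (hD : ∀ j, MemLp (fun x => fderiv ℝ u x (ee j)) 2 (volume.restrict (slab m a b))) :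
    Nice m (fun x => u (Ph m l a b x))
      (fun j x => (slab m a b).indicator (fun x => fderiv ℝ u x (ee j)) x
        + kap m l j * (slab m a b).indicator (fun x => fderiv ℝ u x (ee j)) (Rf m l b x)) := by
  have hV := slab_meas m a b
  have hWm : ∀ j, Measurable ((slab m a b).indicator (fun x => fderiv ℝ u x (ee j))) := fun j =>
    (measurable_fderiv_apply_const ℝ u (ee j)).indicator hV
  have hWL : ∀ j, MemLp ((slab m a b).indicator (fun x => fderiv ℝ u x (ee j))) 2 volume :=
    fun j => (memLp_indicator_iff_restrict hV).2 (hD j)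
  have hwL : MemLp ((slab m a b).indicator u) 2 volume := (memLp_indicator_iff_restrict hV).2 hL
  have hSc : ({a, b, b + (b - a) / l} : Set ℝ).Countable := Set.to_countable _
  -- location facts
  have hRlow : ∀ x : EuclideanSpace ℝ (Fin n), x m < b → Rf m l b x ∉ slab m a b := by
    intro x hx hc
    have := hc.2
    rw [Rf_m] at this
    have : 0 < l * (b - x m) := mul_pos hl (by linarith)
    nlinarith
  have hRhigh : ∀ x : EuclideanSpace ℝ (Fin n), b - l * (x m - b) < a → Rf m l b x ∉ slab m a b := by
    intro x hx hc
    have := hc.1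
    rw [Rf_m] at this
    linarith
  have hRmid : ∀ x : EuclideanSpace ℝ (Fin n), b < x m → a < b - l * (x m - b) →
      Rf m l b x ∈ slab m a b := by
    intro x hx hx'
    have : 0 < l * (x m - b) := mul_pos hl (by linarith)
    refine ⟨?_, ?_⟩ <;> rw [Rf_m] <;> linarith
  have hnlow : ∀ x : EuclideanSpace ℝ (Fin n), x m < a → x ∉ slab m a b :=
    fun x hx hc => by have := hc.1; linarith
  have hnhigh : ∀ x : EuclideanSpace ℝ (Fin n), b < x m → x ∉ slab m a b :=
    fun x hx hc => by have := hc.2; linarith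
  have cm := meas_m m
  have cr : Continuous (fun x : EuclideanSpace ℝ (Fin n) => b - l * (x m - b)) := by fun_prop
  refine ⟨hu.continuous.comp (Ph_cont m l a b), ?_, ?_, ?_, ?_⟩
  · refine MemLp.ae_eq ?_ (hwL.add (memLp_Rf m hl b hwL))
    filter_upwards [ae_notMem m hSc] with x hx
    rcases four hl hx with h | h | h | h
    · simp [hnlow x h, hRlow x (h.trans hab), h0 _ (Ph_low h)]
    · have : x ∈ slab m a b := h
      simp [this, hRlow x h.2, Ph_mid hl h.1 h.2]
    · simp [hnhigh x h.1, hRmid x h.1 h.2, Ph_ref hl h.1 h.2]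
    · simp [hnhigh x h.1, hRhigh x h.2, h0 _ (Ph_high h.2)]
  · intro j
    exact (hWm j).add (((hWm j).comp (Rf_cont m l b).measurable).const_mul _)
  · intro j
    exact (hWL j).add ((memLp_Rf m hl b (hWL j)).const_mul _)
  · refine ⟨_, hSc, ?_⟩
    intro x hx j
    have hz : HasFDerivAt (fun _ : EuclideanSpace ℝ (Fin n) => (0:ℝ)) 
      (0 : EuclideanSpace ℝ (Fin n) →L[ℝ] ℝ) x := hasFDerivAt_const _ _
    rcases four hl hx with h | h | h | h
    · have hev : (fun x => u (Ph m l a b x)) =ᶠ[𝓝 x] fun _ => 0 := by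
        filter_upwards [(isOpen_lt cm continuous_const).mem_nhds h] with y hy
        exact h0 _ (Ph_low hy)
      have := (hz.congr_of_eventuallyEq hev).hasLineDerivAt (ee j)
      simpa [hnlow x h, hRlow x (h.trans hab)] using this
    · have hev : (fun x => u (Ph m l a b x)) =ᶠ[𝓝 x] u := by
        filter_upwards [(isOpen_lt cm continuous_const).mem_nhds h.2,
          (isOpen_lt continuous_const cm).mem_nhds h.1] with y hy hy'
        rw [Ph_mid hl hy' hy]
      have := ((hu x).hasFDerivAt.congr_of_eventuallyEq hev).hasLineDerivAt (ee j)
      have hx' : x ∈ slab m a b := h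
      simpa [hx', hRlow x h.2] using this
    · have hev : (fun x => u (Ph m l a b x)) =ᶠ[𝓝 x] fun x => u (Rf m l b x) := by
        filter_upwards [(isOpen_lt continuous_const cm).mem_nhds h.1,
          (isOpen_lt continuous_const cr).mem_nhds h.2] with y hy hy'
        rw [Ph_ref hl hy hy']
      have hR : HasFDerivAt (Rf m l b) (Lm m l) x := (Lm m l).hasFDerivAt.add_const _
      have h1 : HasFDerivAt (fun x => u (Rf m l b x)) ((fderiv ℝ u (Rf m l b x)).comp (Lm m l)) x :=
        (hu (Rf m l b x)).hasFDerivAt.comp x hR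
      have := (h1.congr_of_eventuallyEq hev).hasLineDerivAt (ee j)
      rw [ContinuousLinearMap.comp_apply, Lm_ee, map_smul, smul_eq_mul] at this
      simpa [hnhigh x h.1, hRmid x h.1 h.2] using this
    · have hev : (fun x => u (Ph m l a b x)) =ᶠ[𝓝 x] fun _ => 0 := by
        filter_upwards [(isOpen_lt cr continuous_const).mem_nhds h.2] with y hy
        exact h0 _ (Ph_high hy)
      have := (hz.congr_of_eventuallyEq hev).hasLineDerivAt (ee j)
      simpa [hnhigh x h.1, hRhigh x h.2] using this

lemma Nice.comb {n : ℕ} {m : Fin n} {u v : EuclideanSpace ℝ (Fin n) → ℝ}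
    {U V : Fin n → EuclideanSpace ℝ (Fin n) → ℝ} (hu : Nice m u U) (hv : Nice m v V) (p q : ℝ) :
    Nice m (fun x => p * u x + q * v x) (fun j x => p * U j x + q * V j x) := by
  obtain ⟨S, hS, hd⟩ := hu.deriv
  obtain ⟨T, hT, hd'⟩ := hv.deriv
  refine ⟨(hu.cont.const_mul p).add (hv.cont.const_mul q), (hu.mem.const_mul p).add (hv.mem.const_mul q),
    fun j => ((hu.meas j).const_mul p).add ((hv.meas j).const_mul q),
    fun j => ((hu.memD j).const_mul p).add ((hv.memD j).const_mul q), S ∪ T, hS.union hT, ?_⟩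
  intro x hx j
  rw [Set.mem_union, not_or] at hx
  exact HasDerivAt.add (HasDerivAt.const_mul p (hd x hx.1 j)) (HasDerivAt.const_mul q (hd' x hx.2 j))

lemma integral_sq_eq {n : ℕ} {f : EuclideanSpace ℝ (Fin n) → ℝ} (hf : AEStronglyMeasurable f volume) :
    ∫ x, f x ^ 2 = (∫⁻ x, ‖f x‖ₑ ^ 2).toReal := by
  rw [integral_eq_lintegral_of_nonneg_ae (Eventually.of_forall fun x => sq_nonneg _) (hf.pow 2)]
  congr 1
  apply lintegral_congr
  intro x
  rw [← sq_abs, ENNReal.ofReal_pow (abs_nonneg _), ← Real.norm_eq_abs, ofReal_norm]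

lemma poincare {n : ℕ} {m : Fin n} {u : EuclideanSpace ℝ (Fin n) → ℝ}
    {U : Fin n → EuclideanSpace ℝ (Fin n) → ℝ} (hu : Nice m u U) (j : Fin n) (h : ℝ) :
    ∫ x, (u (x + h • ee j) - u x) ^ 2 ≤ h ^ 2 * ∫ x, U j x ^ 2 := by
  have hc : Continuous (fun x => u (x + h • ee j) - u x) := by
    have := hu.cont; fun_prop
  rw [integral_sq_eq hc.aestronglyMeasurable, integral_sq_eq (hu.memD j).1]
  have hfin : ∫⁻ x, ‖U j x‖ₑ ^ 2 < ⊤ := by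
    rw [← eLpNorm_sq]; exact ENNReal.pow_lt_top (hu.memD j).2
  have h1 := ENNReal.toReal_mono
    (ENNReal.mul_lt_top (ENNReal.pow_lt_top enorm_lt_top) hfin).ne (diff_le hu j h)
  rw [ENNReal.toReal_mul, ENNReal.toReal_pow, toReal_enorm, Real.norm_eq_abs, sq_abs] at h1
  exact h1

end KornSlab

namespace KornSlab
open Filter Topology

/-- First extension coefficient. -/
noncomputable def pp {n : ℕ} (m i : Fin n) : ℝ := if i = m then -3 else 3
/-- Second extension coefficient. -/
noncomputable def qq {n : ℕ} (m i : Fin n) : ℝ := if i = m then 4 else -2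

lemma pp_qq {n : ℕ} (m i : Fin n) : pp m i + qq m i = 1 := by
  unfold pp qq; split_ifs <;> norm_num

lemma pk_symm {n : ℕ} (m i j : Fin n) : pp m i * kap m 1 j = pp m j * kap m 1 i := by
  unfold pp kap; split_ifs <;> norm_num

lemma qk_symm {n : ℕ} (m i j : Fin n) : qq m i * kap m 2 j = qq m j * kap m 2 i := by
  unfold qq kap; split_ifs <;> norm_num

lemma pk_sq {n : ℕ} (m i j : Fin n) : (pp m i * kap m 1 j) ^ 2 ≤ 9 := by
  unfold pp kap; split_ifs <;> norm_num

lemma qk_sq {n : ℕ} (m i j : Fin n) : (qq m i * kap m 2 j) ^ 2 ≤ 64 := by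
  unfold qq kap; split_ifs <;> norm_num

lemma main {n : ℕ} (m : Fin n) {a b δ : ℝ} (hδ : 0 < δ) (hab : b - a = δ)
    (f : EuclideanSpace ℝ (Fin n) → EuclideanSpace ℝ (Fin n)) (hf : Differentiable ℝ f)
    (h0 : ∀ x, x m = a → f x = 0)
    (hL : IntegrableOn (fun x => ‖f x‖ ^ 2) (slab m a b))
    (hD : IntegrableOn (fun x => ∑ i, ∑ j, (pderivK f i j x) ^ 2) (slab m a b)) :
    (∫ x in slab m a b, ‖f x‖ ^ 2) ≤ δ ^ 2 * ((3 + 27 * cc m 1 + 192 * cc m 2) *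
      ∫ x in slab m a b, ∑ i, ∑ j, (pderivK f i j x + pderivK f j i x) ^ 2) ∧
    (∫ x in slab m a b, ∑ i, ∑ j, (pderivK f i j x) ^ 2) ≤ (3 + 27 * cc m 1 + 192 * cc m 2) *
      ∫ x in slab m a b, ∑ i, ∑ j, (pderivK f i j x + pderivK f j i x) ^ 2 := by
  have hab' : a < b := by linarith
  have hV := slab_meas m a b
  have hfi : ∀ i, Differentiable ℝ (fun y => f y i) := fun i => by fun_prop
  have hfL : ∀ i, MemLp (fun y => f y i) 2 (volume.restrict (slab m a b)) := by
    intro i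
    have hm := (hfi i).continuous.aestronglyMeasurable (μ := volume.restrict (slab m a b))
    rw [memLp_two_iff_integrable_sq hm]
    refine Integrable.mono' hL (hm.pow 2) (Eventually.of_forall fun x => ?_)
    rw [EuclideanSpace.norm_sq_eq, Real.norm_eq_abs, abs_of_nonneg (sq_nonneg _)]
    have := Finset.single_le_sum (f := fun i => ‖f x i‖ ^ 2) (fun i _ => sq_nonneg _) (Finset.mem_univ i)
    simpa using this
  have hpm : ∀ i j, Measurable (pderivK f i j) := fun i j =>
    measurable_fderiv_apply_const ℝ _ _
  have hDL : ∀ i j, MemLp (pderivK f i j) 2 (volume.restrict (slab m a b)) := by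
    intro i j
    have hm := (hpm i j).aestronglyMeasurable (μ := volume.restrict (slab m a b))
    rw [memLp_two_iff_integrable_sq hm]
    refine Integrable.mono' hD (hm.pow 2) (Eventually.of_forall fun x => ?_)
    rw [Real.norm_eq_abs, abs_of_nonneg (sq_nonneg _)]
    have h1 := Finset.single_le_sum (f := fun j => (pderivK f i j x) ^ 2) (fun i _ => sq_nonneg _)
      (Finset.mem_univ j)
    have h2 := Finset.single_le_sum (f := fun i => ∑ j, (pderivK f i j x) ^ 2)
      (fun i _ => Finset.sum_nonneg fun j _ => sq_nonneg _) (Finset.mem_univ i)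
    exact h1.trans h2
  set W : Fin n → Fin n → EuclideanSpace ℝ (Fin n) → ℝ :=
    fun i j => (slab m a b).indicator (pderivK f i j) with hW
  have hWm : ∀ i j, Measurable (W i j) := fun i j => (hpm i j).indicator hV
  have hWL : ∀ i j, MemLp (W i j) 2 volume :=
    fun i j => (memLp_indicator_iff_restrict hV).2 (hDL i j)
  have hN : ∀ (l : ℝ), 0 < l → ∀ i, Nice m (fun x => f (Ph m l a b x) i)
      (fun j x => W i j x + kap m l j * W i j (Rf m l b x)) := fun l hl i =>
    nice_ext m hab' hl (hfi i) (fun x hx => by simp [h0 x hx]) (hfL i) (hDL i)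
  set F : Fin n → EuclideanSpace ℝ (Fin n) → ℝ := fun i x =>
    pp m i * f (Ph m 1 a b x) i + qq m i * f (Ph m 2 a b x) i with hF
  set G : Fin n → Fin n → EuclideanSpace ℝ (Fin n) → ℝ := fun i j x =>
    pp m i * (W i j x + kap m 1 j * W i j (Rf m 1 b x)) +
    qq m i * (W i j x + kap m 2 j * W i j (Rf m 2 b x)) with hG
  have hFG : ∀ i, Nice m (F i) (G i) := fun i =>
    (hN 1 one_pos i).comb (hN 2 two_pos i) (pp m i) (qq m i)
  have hGs : ∀ i j, Integrable (fun x => G i j x ^ 2) := fun i j => ((hFG i).memD j).integrable_sq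
  have korn := korn_whole hFG
  -- bound of the symmetrised gradient
  set D : Fin n → Fin n → EuclideanSpace ℝ (Fin n) → ℝ := fun i j x => W i j x + W j i x with hDdef
  have hDm : ∀ i j, Measurable (D i j) := fun i j => (hWm i j).add (hWm j i)
  have hDL2 : ∀ i j, MemLp (D i j) 2 volume := fun i j => (hWL i j).add (hWL j i)
  have hsym : ∀ i j, ∫ x, (G i j x + G j i x) ^ 2 ≤
      (3 + 27 * cc m 1 + 192 * cc m 2) * ∫ x, D i j x ^ 2 := by
    intro i j
    have I0 : Integrable (fun x => D i j x ^ 2) := (hDL2 i j).integrable_sq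
    have I1 : Integrable (fun x => D i j (Rf m 1 b x) ^ 2) :=
      (memLp_Rf m one_pos b (hDL2 i j)).integrable_sq
    have I2 : Integrable (fun x => D i j (Rf m 2 b x) ^ 2) :=
      (memLp_Rf m two_pos b (hDL2 i j)).integrable_sq
    have J1 := integral_Rf m one_pos b ((hDm i j).pow_const 2)
    have J2 := integral_Rf m two_pos b ((hDm i j).pow_const 2)
    have K1 : ∫ x, (3 * D i j x ^ 2 + 27 * D i j (Rf m 1 b x) ^ 2 + 192 * D i j (Rf m 2 b x) ^ 2) =
        (3 + 27 * cc m 1 + 192 * cc m 2) * ∫ x, D i j x ^ 2 := by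
      have t1 := integral_add (I0.const_mul 3) (I1.const_mul 27)
      have t2 := integral_add ((I0.const_mul 3).add (I1.const_mul 27)) (I2.const_mul 192)
      simp only [Pi.add_apply] at t1 t2
      rw [t2, t1, integral_const_mul, integral_const_mul, integral_const_mul, J1, J2]
      ring
    rw [← K1]
    refine integral_mono ((((hFG i).memD j).add ((hFG j).memD i)).integrable_sq)
      (((I0.const_mul 3).add (I1.const_mul 27)).add (I2.const_mul 192)) fun x => ?_
    have e : G i j x + G j i x = D i j x + (pp m i * kap m 1 j) * D i j (Rf m 1 b x)
        + (qq m i * kap m 2 j) * D i j (Rf m 2 b x) := by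
      have s1 := pk_symm m i j
      have s2 := qk_symm m i j
      have s3 := pp_qq m i
      have s4 := pp_qq m j
      simp only [hG, hDdef]
      linear_combination (W i j x) * s3 + (W j i x) * s4 - W j i (Rf m 1 b x) * s1
        - W j i (Rf m 2 b x) * s2
    have p1 := pk_sq m i j
    have p2 := qk_sq m i j
    simp only [Pi.add_apply]
    rw [e]
    generalize pp m i * kap m 1 j = α at *
    generalize qq m i * kap m 2 j = β at *
    generalize D i j x = A
    generalize D i j (Rf m 1 b x) = B
    generalize D i j (Rf m 2 b x) = C
    have q1 : (α * B) ^ 2 ≤ 9 * B ^ 2 := by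
      rw [mul_pow]; exact mul_le_mul_of_nonneg_right p1 (sq_nonneg _)
    have q2 : (β * C) ^ 2 ≤ 64 * C ^ 2 := by
      rw [mul_pow]; exact mul_le_mul_of_nonneg_right p2 (sq_nonneg _)
    nlinarith [sq_nonneg (A - α * B), sq_nonneg (A - β * C), sq_nonneg (α * B - β * C)]
  have hDint : ∑ i, ∑ j, ∫ x, D i j x ^ 2 =
      ∫ x in slab m a b, ∑ i, ∑ j, (pderivK f i j x + pderivK f j i x) ^ 2 := by
    rw [← integral_indicator hV]
    have : (slab m a b).indicator (fun x => ∑ i, ∑ j, (pderivK f i j x + pderivK f j i x) ^ 2) =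
        fun x => ∑ i, ∑ j, D i j x ^ 2 := by
      ext x
      by_cases hx : x ∈ slab m a b <;> simp [hDdef, hW, hx]
    rw [this, integral_finsetSum _ (fun i _ => integrable_finsetSum _ fun j _ =>
      (hDL2 i j).integrable_sq)]
    congr 1; ext i
    rw [integral_finsetSum _ (fun j _ => (hDL2 i j).integrable_sq)]
  have hGtot : ∑ i, ∑ j, ∫ x, G i j x ^ 2 ≤ (3 + 27 * cc m 1 + 192 * cc m 2) *
      ∫ x in slab m a b, ∑ i, ∑ j, (pderivK f i j x + pderivK f j i x) ^ 2 := by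
    have h1 : ∑ i, ∑ j, ∫ x, (G i j x + G j i x) ^ 2 ≤
        (3 + 27 * cc m 1 + 192 * cc m 2) * ∑ i, ∑ j, ∫ x, D i j x ^ 2 := by
      simp_rw [Finset.mul_sum]
      exact Finset.sum_le_sum fun i _ => Finset.sum_le_sum fun j _ => hsym i j
    have h2 : 0 ≤ ∑ i, ∑ j, ∫ x, G i j x ^ 2 := Finset.sum_nonneg fun i _ =>
      Finset.sum_nonneg fun j _ => integral_nonneg fun x => sq_nonneg _
    rw [← hDint]
    linarith
  have hR : ∀ l : ℝ, 0 < l → ∀ x ∈ slab m a b, Rf m l b x ∉ slab m a b := by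
    intro l hl x hx hc
    have h1 := hc.2
    rw [Rf_m] at h1
    have h2 : 0 < l * (b - x m) := mul_pos hl (by linarith [hx.2])
    nlinarith
  constructor
  · -- Poincare
    have hP : ∀ i, ∫ x in slab m a b, (f x i) ^ 2 ≤ δ ^ 2 * ∫ x, G i m x ^ 2 := by
      intro i
      have h1 := poincare (hFG i) m (-δ)
      rw [neg_sq] at h1
      refine le_trans ?_ h1
      have hmem : MemLp (fun x => F i (x + (-δ) • ee m) - F i x) 2 volume :=
        ((hFG i).mem.comp_measurePreserving (measurePreserving_add_right volume _)).sub (hFG i).mem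
      refine le_trans (le_of_eq ?_) (setIntegral_le_integral (s := slab m a b) hmem.integrable_sq
        (Eventually.of_forall fun x => sq_nonneg _))
      refine setIntegral_congr_fun hV fun x hx => ?_
      have hlow : (x + (-δ) • ee m : EuclideanSpace ℝ (Fin n)) m < a := by
        have := hx.2
        simp; linarith
      have e1 : F i (x + (-δ) • ee m) = 0 := by
        simp only [hF]
        rw [h0 _ (Ph_low hlow), h0 _ (Ph_low hlow)]; simp
      have e2 : F i x = f x i := by
        simp only [hF]
        rw [Ph_mid one_pos hx.1 hx.2, Ph_mid two_pos hx.1 hx.2, ← add_mul, pp_qq, one_mul]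
      simp only [e1, e2]; ring
    have h2 : ∫ x in slab m a b, ‖f x‖ ^ 2 = ∑ i, ∫ x in slab m a b, (f x i) ^ 2 := by
      rw [← integral_finsetSum _ (fun i _ => (hfL i).integrable_sq)]
      congr 1; ext x
      rw [EuclideanSpace.norm_sq_eq]; simp
    rw [h2]
    calc _ ≤ ∑ i, δ ^ 2 * ∫ x, G i m x ^ 2 := Finset.sum_le_sum fun i _ => hP i
      _ = δ ^ 2 * ∑ i, ∫ x, G i m x ^ 2 := by rw [Finset.mul_sum]
      _ ≤ δ ^ 2 * ∑ i, ∑ j, ∫ x, G i j x ^ 2 := by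
        gcongr with i
        exact Finset.single_le_sum (f := fun j => ∫ x, G i j x ^ 2)
          (fun j _ => integral_nonneg fun x => sq_nonneg _) (Finset.mem_univ m)
      _ ≤ _ := by gcongr
  · refine le_trans ?_ hGtot
    rw [integral_finsetSum _ (fun i _ => integrable_finsetSum _ fun j _ => (hDL i j).integrable_sq)]
    refine Finset.sum_le_sum fun i _ => ?_
    rw [integral_finsetSum _ (fun j _ => (hDL i j).integrable_sq)]
    refine Finset.sum_le_sum fun j _ => ?_
    refine le_trans (le_of_eq ?_) (setIntegral_le_integral (s := slab m a b) (hGs i j)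
        (Eventually.of_forall fun x => sq_nonneg _))
    refine setIntegral_congr_fun hV fun x hx => ?_
    have e : G i j x = pderivK f i j x := by
      simp only [hG, hW, Set.indicator_of_mem hx, Set.indicator_of_notMem (hR 1 one_pos x hx),
        Set.indicator_of_notMem (hR 2 two_pos x hx), mul_zero, add_zero]
      rw [← add_mul, pp_qq, one_mul]
    simp only [e]

end KornSlab

/-- **Korn's inequality on a slab.** Let `V = ℝ^{n-1} × (a,b)` (realized as
the slab `{x ∈ ℝⁿ : a < xₙ < b}`).  There is a constant `c > 0` depending only on `b − a`
and `n` such that for every `f ∈ H¹(V; ℝⁿ)` (here: everywhere differentiable with `f` and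
`∇f` square integrable on `V`) whose trace on `{xₙ = a}` vanishes,
`‖f‖_{L²} + ‖∇f‖_{L²} ≤ c ‖𝔻f‖_{L²}` where `𝔻f = ∇f + (∇f)ᵀ`. -/
theorem stmt_8 (n : ℕ) (hn : 0 < n) (δ : ℝ) (hδ : 0 < δ) :
    ∃ c : ℝ, 0 < c ∧
      ∀ (a b : ℝ), b - a = δ →
        ∀ f : EuclideanSpace ℝ (Fin n) → EuclideanSpace ℝ (Fin n),
          Differentiable ℝ f →
          (∀ x, x ⟨n - 1, by omega⟩ = a → f x = 0) →
          IntegrableOn (fun x => ‖f x‖ ^ 2)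
            {x : EuclideanSpace ℝ (Fin n) | a < x ⟨n - 1, by omega⟩ ∧ x ⟨n - 1, by omega⟩ < b} →
          IntegrableOn (fun x => ∑ i, ∑ j, (pderivK f i j x) ^ 2)
            {x : EuclideanSpace ℝ (Fin n) | a < x ⟨n - 1, by omega⟩ ∧ x ⟨n - 1, by omega⟩ < b} →
          Real.sqrt (∫ x in {x : EuclideanSpace ℝ (Fin n) |
                a < x ⟨n - 1, by omega⟩ ∧ x ⟨n - 1, by omega⟩ < b}, ‖f x‖ ^ 2) +
            Real.sqrt (∫ x in {x : EuclideanSpace ℝ (Fin n) |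
                a < x ⟨n - 1, by omega⟩ ∧ x ⟨n - 1, by omega⟩ < b},
                ∑ i, ∑ j, (pderivK f i j x) ^ 2) ≤
          c * Real.sqrt (∫ x in {x : EuclideanSpace ℝ (Fin n) |
                a < x ⟨n - 1, by omega⟩ ∧ x ⟨n - 1, by omega⟩ < b},
                ∑ i, ∑ j, (pderivK f i j x + pderivK f j i x) ^ 2) := by
  refine ⟨(δ + 1) * Real.sqrt (3 + 27 * KornSlab.cc (⟨n - 1, by omega⟩ : Fin n) 1 +
    192 * KornSlab.cc (⟨n - 1, by omega⟩ : Fin n) 2), ?_, ?_⟩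
  · have h1 := KornSlab.cc_nonneg (⟨n - 1, by omega⟩ : Fin n) 1
    have h2 := KornSlab.cc_nonneg (⟨n - 1, by omega⟩ : Fin n) 2
    positivity
  intro a b hab f hf h0 hL hD
  have h1 := KornSlab.cc_nonneg (⟨n - 1, by omega⟩ : Fin n) 1
  have h2 := KornSlab.cc_nonneg (⟨n - 1, by omega⟩ : Fin n) 2
  obtain ⟨hA, hB⟩ := KornSlab.main (⟨n - 1, by omega⟩ : Fin n) hδ hab f hf h0 hL hD
  have hA' := Real.sqrt_le_sqrt hA
  have hB' := Real.sqrt_le_sqrt hB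
  rw [Real.sqrt_mul (by positivity), Real.sqrt_mul (by positivity), Real.sqrt_sq hδ.le] at hA'
  rw [Real.sqrt_mul (by positivity)] at hB'
  refine (add_le_add hA' hB').trans (le_of_eq ?_)
  unfold KornSlab.slab
  ring
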